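/- arXiv:2002.02123 — 4 statements merged into one kernel-verified Lean document; each statement's English description precedes it below -/
import Mathlib

section
/- For all real numbers A > 0 and B > 0, the supremum over w ∈ ℝ of the quantity w² / ((√A − w)² + B) equals 1 + A/B. -/
section QuadraticTransform

variable {K : Type*} [Field K]

/-- The Lagrange identity for the vectors `(s - w, √B)` and `(-1, s / √B)`, whose inner product
is `w`. -/
theorem one_add_sq_div_sub_sq_div_sub_sq_add {s B w : K} (hB : B ≠ 0)
    (hw : (s - w) ^ 2 + B ≠ 0) :
    1 + s ^ 2 / B - w ^ 2 / ((s - w) ^ 2 + B) =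
      (s * (s - w) + B) ^ 2 / (B * ((s - w) ^ 2 + B)) := by
  field_simp
  ring

variable [LinearOrder K] [IsStrictOrderedRing K] {B : K}

theorem sq_div_sub_sq_add_le (s w : K) (hB : 0 < B) :
    w ^ 2 / ((s - w) ^ 2 + B) ≤ 1 + s ^ 2 / B := by
  have hw : 0 < (s - w) ^ 2 + B := by positivity
  rw [← sub_nonneg, one_add_sq_div_sub_sq_div_sub_sq_add hB.ne' hw.ne']
  positivity

theorem sq_div_sub_sq_add_eq_of_mul_sub_add_eq_zero {s w : K} (hB : 0 < B)
    (h : s * (s - w) + B = 0) :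
    w ^ 2 / ((s - w) ^ 2 + B) = 1 + s ^ 2 / B := by
  have hw : 0 < (s - w) ^ 2 + B := by positivity
  have gap_eq_zero := one_add_sq_div_sub_sq_div_sub_sq_add hB.ne' hw.ne'
  rw [h, zero_pow two_ne_zero, zero_div] at gap_eq_zero
  exact (sub_eq_zero.mp gap_eq_zero).symm

theorem isGreatest_range_sq_div_sub_sq_add {s : K} (hs : s ≠ 0) (hB : 0 < B) :
    IsGreatest (Set.range fun w : K => w ^ 2 / ((s - w) ^ 2 + B)) (1 + s ^ 2 / B) := by
  have gap_root : s * (s - (s + B / s)) + B = 0 := by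
    field_simp
    ring
  exact ⟨⟨s + B / s, sq_div_sub_sq_add_eq_of_mul_sub_add_eq_zero hB gap_root⟩,
    Set.forall_mem_range.mpr fun w => sq_div_sub_sq_add_le s w hB⟩

end QuadraticTransform

/-- For all real `A > 0` and `B > 0`, the supremum over `w ∈ ℝ` of
`w² / ((√A − w)² + B)` equals `1 + A/B`. -/
theorem stmt_0 (A B : ℝ) (hA : 0 < A) (hB : 0 < B) :
    (⨆ w : ℝ, w ^ 2 / ((Real.sqrt A - w) ^ 2 + B)) = 1 + A / B := by
  have hmax := isGreatest_range_sq_div_sub_sq_add (Real.sqrt_pos.mpr hA).ne' hB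
  rw [Real.sq_sqrt hA.le] at hmax
  exact hmax.isLUB.ciSup_eq
end

section
/- For all real numbers A > 0 and B > 0, the function f(w) = w² / ((√A − w)² + B) on ℝ satisfies f(w*) = 1 + A/B at w* = (A + B)/√A, and f(w) < 1 + A/B for every real w ≠ w*; that is, w* = (A + B)/√A is the unique global maximizer of f. -/
section QuadraticTransform

variable {K : Type*} [Field K] {s B w : K}

/- Lagrange's identity for the inner product `w = (s / √B) * √B + 1 * (w - s)`,
divided by `(s - w) ^ 2 + B`. -/
theorem one_add_sq_div_sub_sq_div (hB : B ≠ 0) (hD : (s - w) ^ 2 + B ≠ 0) :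
    1 + s ^ 2 / B - w ^ 2 / ((s - w) ^ 2 + B) =
      (s * w - (s ^ 2 + B)) ^ 2 / (B * ((s - w) ^ 2 + B)) := by
  field_simp
  ring

theorem sq_div_eq_one_add_sq_div_iff (hB : B ≠ 0) (hD : (s - w) ^ 2 + B ≠ 0) :
    w ^ 2 / ((s - w) ^ 2 + B) = 1 + s ^ 2 / B ↔ s * w = s ^ 2 + B := by
  rw [eq_comm, ← sub_eq_zero, one_add_sq_div_sub_sq_div hB hD,
    div_eq_zero_iff, or_iff_left (mul_ne_zero hB hD), sq_eq_zero_iff, sub_eq_zero]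

variable [LinearOrder K] [IsStrictOrderedRing K]

theorem sq_div_le_one_add_sq_div (hB : 0 < B) :
    w ^ 2 / ((s - w) ^ 2 + B) ≤ 1 + s ^ 2 / B := by
  have hD : 0 < (s - w) ^ 2 + B := by positivity
  rw [← sub_nonneg, one_add_sq_div_sub_sq_div hB.ne' hD.ne']
  positivity

theorem stmt_1_general {A : K} (hA : s ^ 2 = A) (hs : s ≠ 0) (hB : 0 < B) :
    ((A + B) / s) ^ 2 / ((s - (A + B) / s) ^ 2 + B) = 1 + A / B ∧
      ∀ w : K, w ≠ (A + B) / s → w ^ 2 / ((s - w) ^ 2 + B) < 1 + A / B := by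
  subst hA
  have eq_iff (w : K) :
      w ^ 2 / ((s - w) ^ 2 + B) = 1 + s ^ 2 / B ↔ w = (s ^ 2 + B) / s := by
    have hD : 0 < (s - w) ^ 2 + B := by positivity
    rw [sq_div_eq_one_add_sq_div_iff hB.ne' hD.ne', eq_div_iff hs, mul_comm]
  exact ⟨(eq_iff _).2 rfl, fun w hw ↦
    (sq_div_le_one_add_sq_div hB).lt_of_ne (mt (eq_iff w).1 hw)⟩

end QuadraticTransform

/-- For `A, B > 0`, the function `f(w) = w² / ((√A − w)² + B)` attains the value
`1 + A/B` at `w* = (A + B)/√A`, and `f(w) < 1 + A/B` for every `w ≠ w*`. -/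
theorem stmt_1 (A B : ℝ) (hA : 0 < A) (hB : 0 < B) :
    ((A + B) / Real.sqrt A) ^ 2 / ((Real.sqrt A - (A + B) / Real.sqrt A) ^ 2 + B)
      = 1 + A / B ∧
    ∀ w : ℝ, w ≠ (A + B) / Real.sqrt A →
      w ^ 2 / ((Real.sqrt A - w) ^ 2 + B) < 1 + A / B :=
  stmt_1_general (Real.sq_sqrt hA.le) (Real.sqrt_ne_zero'.2 hA) hB
end

section
/- Let S be a nonempty set and let A, B : S → ℝ satisfy A(t) > 0 and B(t) > 0 for all t ∈ S. Then a pair (t₀, w₀) ∈ S × ℝ is a global maximizer of the function (t, w) ↦ w² / ((√(A(t)) − w)² + B(t)) over S × ℝ if and only if t₀ is a global maximizer of t ↦ 1 + A(t)/B(t) over S and w₀ = (A(t₀) + B(t₀))/√(A(t₀)); moreover, in that case the two maximum values coincide. -/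
/-!
For every `t`, the excess of `1 + A t / B t` over the transformed objective at `(t, w)` is a
square divided by a positive number, and the square vanishes exactly at
`w = (A t + B t) / √(A t)`. Hence `1 + A t / B t` is the maximum over `w` alone, and maximizing
jointly is the same as maximizing first over `w` and then over `t`.
-/

theorem forall_forall_le_iff_of_isLUB {ι κ α : Type*} [PartialOrder α] {f : ι → κ → α}
    {g : ι → α} (hg : ∀ i, IsLUB (Set.range (f i)) (g i)) {i₀ : ι} {k₀ : κ} :
    (∀ i k, f i k ≤ f i₀ k₀) ↔ (∀ i, g i ≤ g i₀) ∧ f i₀ k₀ = g i₀ := by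
  have f_le (i : ι) (k : κ) : f i k ≤ g i := (hg i).1 (Set.mem_range_self k)
  constructor
  · intro hmax
    have g_le (i : ι) : g i ≤ f i₀ k₀ := (hg i).2 (Set.forall_mem_range.2 (hmax i))
    exact ⟨fun i => (g_le i).trans (f_le i₀ k₀), (f_le i₀ k₀).antisymm (g_le i₀)⟩
  · rintro ⟨hmax, heq⟩ i k
    calc
      f i k ≤ g i := f_le i k
      _ ≤ g i₀ := hmax i
      _ = f i₀ k₀ := heq.symm

section QuadraticTransform

variable {K : Type*} [Field K]

/-- The quadratic-transform objective with scaling variable `w` that replaces the ratio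
`1 + s ^ 2 / b`. The numerator enters through its square root `s`, so that no square roots
are needed in `K`. -/
def quadraticTransform (s b w : K) : K :=
  w ^ 2 / ((s - w) ^ 2 + b)

theorem one_add_sq_div_sub_quadraticTransform {s b w : K} (hb : b ≠ 0)
    (hd : (s - w) ^ 2 + b ≠ 0) :
    1 + s ^ 2 / b - quadraticTransform s b w =
      (s * w - (s ^ 2 + b)) ^ 2 / (b * ((s - w) ^ 2 + b)) := by
  unfold quadraticTransform
  field_simp
  ring

theorem quadraticTransform_eq_one_add_sq_div_iff {s b w : K} (hs : s ≠ 0) (hb : b ≠ 0)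
    (hd : (s - w) ^ 2 + b ≠ 0) :
    quadraticTransform s b w = 1 + s ^ 2 / b ↔ w = (s ^ 2 + b) / s := by
  calc
    quadraticTransform s b w = 1 + s ^ 2 / b
      ↔ (s * w - (s ^ 2 + b)) ^ 2 / (b * ((s - w) ^ 2 + b)) = 0 := by
        rw [← one_add_sq_div_sub_quadraticTransform hb hd, sub_eq_zero, eq_comm]
    _ ↔ w * s = s ^ 2 + b := by
        rw [div_eq_zero_iff, or_iff_left (mul_ne_zero hb hd), sq_eq_zero_iff, sub_eq_zero,
          mul_comm]
    _ ↔ w = (s ^ 2 + b) / s := (eq_div_iff hs).symm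

variable [LinearOrder K] [IsStrictOrderedRing K]

theorem quadraticTransform_le_one_add_sq_div {b : K} (hb : 0 < b) (s w : K) :
    quadraticTransform s b w ≤ 1 + s ^ 2 / b := by
  have hd : 0 < (s - w) ^ 2 + b := by positivity
  rw [← sub_nonneg, one_add_sq_div_sub_quadraticTransform hb.ne' hd.ne']
  positivity

theorem isGreatest_range_quadraticTransform {s b : K} (hs : s ≠ 0) (hb : 0 < b) :
    IsGreatest (Set.range (quadraticTransform s b)) (1 + s ^ 2 / b) := by
  refine ⟨⟨(s ^ 2 + b) / s, ?_⟩,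
    Set.forall_mem_range.2 (quadraticTransform_le_one_add_sq_div hb s)⟩
  exact (quadraticTransform_eq_one_add_sq_div_iff hs hb.ne' (by positivity)).2 rfl

end QuadraticTransform

/-- Equivalence of global maximizers for the quadratic transform:
`(t₀, w₀)` globally maximizes `(t, w) ↦ w² / ((√(A t) − w)² + B t)` over `S × ℝ`
iff `t₀` globally maximizes `t ↦ 1 + A t / B t` over `S` and
`w₀ = (A t₀ + B t₀)/√(A t₀)`; moreover the two maximum values then coincide. -/
theorem stmt_2 {S : Type*} [Nonempty S] (A B : S → ℝ)
    (hA : ∀ t, 0 < A t) (hB : ∀ t, 0 < B t) (t₀ : S) (w₀ : ℝ) :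
    ((∀ t : S, ∀ w : ℝ,
        w ^ 2 / ((Real.sqrt (A t) - w) ^ 2 + B t)
          ≤ w₀ ^ 2 / ((Real.sqrt (A t₀) - w₀) ^ 2 + B t₀)) ↔
      ((∀ t : S, 1 + A t / B t ≤ 1 + A t₀ / B t₀) ∧
        w₀ = (A t₀ + B t₀) / Real.sqrt (A t₀))) ∧
    ((∀ t : S, ∀ w : ℝ,
        w ^ 2 / ((Real.sqrt (A t) - w) ^ 2 + B t)
          ≤ w₀ ^ 2 / ((Real.sqrt (A t₀) - w₀) ^ 2 + B t₀)) →
      w₀ ^ 2 / ((Real.sqrt (A t₀) - w₀) ^ 2 + B t₀) = 1 + A t₀ / B t₀) := by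
  have sqrt_ne (t : S) : √(A t) ≠ 0 := (Real.sqrt_pos.2 (hA t)).ne'
  have isLUB (t : S) :
      IsLUB (Set.range (quadraticTransform √(A t) (B t))) (1 + A t / B t) := by
    simpa only [Real.sq_sqrt (hA t).le] using
      (isGreatest_range_quadraticTransform (sqrt_ne t) (hB t)).isLUB
  have attained_iff : quadraticTransform √(A t₀) (B t₀) w₀ = 1 + A t₀ / B t₀ ↔
      w₀ = (A t₀ + B t₀) / √(A t₀) := by
    have hd : (√(A t₀) - w₀) ^ 2 + B t₀ ≠ 0 := (add_pos_of_nonneg_of_pos (sq_nonneg _) (hB t₀)).ne'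
    simpa only [Real.sq_sqrt (hA t₀).le] using
      quadraticTransform_eq_one_add_sq_div_iff (sqrt_ne t₀) (hB t₀).ne' hd
  have joint_max_iff := forall_forall_le_iff_of_isLUB isLUB (i₀ := t₀) (k₀ := w₀)
  exact ⟨joint_max_iff.trans (and_congr_right' attained_iff), fun hmax => (joint_max_iff.1 hmax).2⟩
end

section
/- Let n, K ∈ ℕ, let P > 0 be real, and for each k ∈ {1, …, K} let μ_k ≥ 0 and l_k > 0 be reals, w_k ≥ 0 a real, and d_k, q_k ∈ ℝⁿ vectors with nonnegative entries. Then the function G(t) = −Σ_{k=1}^{K} μ_k (l_k/ln 2) [ (√(P ⟨t, d_k⟩) − w_k)² + 1 + P ⟨t, q_k⟩ ] is concave on the set {t ∈ ℝⁿ : 0 ≤ t_v ≤ 1 for all v}. -/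
/-!
Expanding `(√x - w)² = x - 2w√x + w²` for `x ≥ 0` leaves an affine function minus a nonnegative
multiple of the concave function `√`, so `x ↦ (√x - w)²` is convex on `[0, ∞)`. Convexity survives
precomposition with the linear form `t ↦ P⟨t, d⟩`, adding the interference term, and nonnegative
linear combination.
-/

theorem convexOn_sq_sqrt_sub {w : ℝ} (hw : 0 ≤ w) :
    ConvexOn ℝ (Set.Ici 0) fun x : ℝ => (√x - w) ^ 2 := by
  have sqrt_term : ConcaveOn ℝ (Set.Ici 0) fun x : ℝ => (2 * w) • √x :=
    Real.strictConcaveOn_sqrt.concaveOn.smul (by positivity)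
  have expansion : ConvexOn ℝ (Set.Ici 0) fun x : ℝ => x - (2 * w) • √x + w ^ 2 :=
    ((convexOn_id (convex_Ici 0)).sub sqrt_term).add_const (w ^ 2)
  refine expansion.congr fun x hx => ?_
  simp only [sub_sq, Real.sq_sqrt hx, smul_eq_mul]
  ring

section

variable {E κ : Type*} [AddCommGroup E] [Module ℝ E] {s : Set E}

theorem convexOn_finset_sum {A : Finset κ} {f : κ → E → ℝ} (hs : Convex ℝ s)
    (hf : ∀ k ∈ A, ConvexOn ℝ s (f k)) : ConvexOn ℝ s fun t => ∑ k ∈ A, f k t := by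
  have sum_convex : ConvexOn ℝ s (∑ k ∈ A, f k) :=
    Finset.sum_induction f (ConvexOn ℝ s) (fun _ _ => ConvexOn.add) (convexOn_const 0 hs) hf
  exact sum_convex.congr fun t _ => Finset.sum_apply t A f

theorem convexOn_sq_sqrt_linearMap_sub {w : ℝ} (d : E →ₗ[ℝ] ℝ) (hs : Convex ℝ s) (hw : 0 ≤ w)
    (hd : ∀ t ∈ s, 0 ≤ d t) : ConvexOn ℝ s fun t => (√(d t) - w) ^ 2 :=
  ((convexOn_sq_sqrt_sub hw).comp_linearMap d).subset hd hs

theorem stmt_5_general [Fintype κ] {P : ℝ} {c w : κ → ℝ} (d : κ → E →ₗ[ℝ] ℝ) {q : κ → E → ℝ}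
    (hs : Convex ℝ s) (hP : 0 ≤ P) (hc : ∀ k, 0 ≤ c k) (hw : ∀ k, 0 ≤ w k)
    (hd : ∀ k, ∀ t ∈ s, 0 ≤ d k t) (hq : ∀ k, ConvexOn ℝ s (q k)) :
    ConcaveOn ℝ s fun t => -∑ k, c k * ((√(P * d k t) - w k) ^ 2 + 1 + P * q k t) := by
  refine (convexOn_finset_sum hs fun k _ => ConvexOn.smul (hc k) ?_).neg
  have desired : ConvexOn ℝ s fun t => (√(P * d k t) - w k) ^ 2 :=
    convexOn_sq_sqrt_linearMap_sub (P • d k) hs (hw k) fun t ht => mul_nonneg hP (hd k t ht)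
  exact (desired.add_const 1).add ((hq k).smul hP)

end

theorem convex_unitBox (ι : Type*) : Convex ℝ {t : ι → ℝ | ∀ v, 0 ≤ t v ∧ t v ≤ 1} := by
  simpa [Set.pi] using convex_pi (s := Set.univ) fun (_ : ι) _ => convex_Icc (0 : ℝ) 1

open Finset in
/-- Concavity of the transformed weighted sum-rate objective
`G(t) = −Σ_k μ_k (l_k/ln 2)[(√(P⟨t,d_k⟩) − w_k)² + 1 + P⟨t,q_k⟩]`
on the box `{t : 0 ≤ t_v ≤ 1}`. -/
theorem stmt_5 (n K : ℕ) (P : ℝ) (hP : 0 < P)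
    (μ l w : Fin K → ℝ) (d q : Fin K → Fin n → ℝ)
    (hμ : ∀ k, 0 ≤ μ k) (hl : ∀ k, 0 < l k) (hw : ∀ k, 0 ≤ w k)
    (hd : ∀ k v, 0 ≤ d k v) (hq : ∀ k v, 0 ≤ q k v) :
    ConcaveOn ℝ {t : Fin n → ℝ | ∀ v, 0 ≤ t v ∧ t v ≤ 1}
      (fun t : Fin n → ℝ =>
        -∑ k : Fin K, μ k * (l k / Real.log 2) *
          ((Real.sqrt (P * ∑ v : Fin n, t v * d k v) - w k) ^ 2 + 1 +
            P * ∑ v : Fin n, t v * q k v)) := by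
  have hbox := convex_unitBox (Fin n)
  have weight_nonneg (k : Fin K) : 0 ≤ μ k * (l k / Real.log 2) :=
    mul_nonneg (hμ k) (div_nonneg (hl k).le (Real.log_nonneg one_le_two))
  exact stmt_5_general (fun k => (dotProductBilin ℝ ℝ).flip (d k)) hbox hP.le weight_nonneg hw
    (fun k _ ht => dotProduct_nonneg_of_nonneg (fun v => (ht v).1) (hd k))
    (fun k => ((dotProductBilin ℝ ℝ).flip (q k)).convexOn hbox)
end
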